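/- Let (X, μ) be a GTS and let f_α : (X, μ) → (Y_α, ν_α), α ∈ J, be a point-separating family of continuous maps (for any distinct x₁, x₂ ∈ X there is α ∈ J with f_α(x₁) ≠ f_α(x₂)) such that for every x ∈ M ∈ μ there exist α ∈ J and N ∈ ν_α with x ∈ f_α⁻¹(N) ⊆ M. Then the map f : X → ∏_{α∈J} Y_α defined by f(x) := (f_α(x))_{α∈J} is an embedding of (X, μ) into the product GT on ∏_{α∈J} Y_α, i.e., f is injective and {f(M) | M ∈ μ} equals the trace {W ∩ f(X) | W in the product GT} of the product GT on f(X). -/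

import Mathlib

/-!
Injectivity of `F` is exactly point separation. For the equality of the two families, the preimage
under `F` of a product-open set `⋃ α, π_α⁻¹(N α)` is `⋃ α, (f α)⁻¹(N α)`, which is `μ`-open by
continuity. Conversely, for `M ∈ μ`, let `N α` be the union of all `N ∈ ν α` with `(f α)⁻¹(N) ⊆ M`.
Then `⋃ α, (f α)⁻¹(N α) ⊆ M` by construction, and the base condition gives the reverse
inclusion.
-/

universe u v w

/-- A generalized topology on `X`: contains `∅` and is closed under arbitrary unions. -/
def IsGT {X : Type*} (μ : Set (Set X)) : Prop :=
  ∅ ∈ μ ∧ ∀ S : Set (Set X), S ⊆ μ → ⋃₀ S ∈ μ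

/-- `f` is `(μ, ν)`-continuous: preimages of `ν`-open sets are `μ`-open. -/
def GCont {X Y : Type*} (μ : Set (Set X)) (ν : Set (Set Y)) (f : X → Y) : Prop :=
  ∀ N ∈ ν, f ⁻¹' N ∈ μ

/-- The product generalized topology on `∀ α, Y α`. -/
def prodGT {J : Type v} {Y : J → Type w} (ν : ∀ α, Set (Set (Y α))) :
    Set (Set (∀ α, Y α)) :=
  {U | ∃ M : ∀ α, Set (Y α), (∀ α, M α ∈ ν α) ∧ U = ⋃ α, (fun x => x α) ⁻¹' M α}

theorem stmt12 {X : Type u} {J : Type v} {Y : J → Type w}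
    (μ : Set (Set X)) (hμ : IsGT μ)
    (ν : ∀ α, Set (Set (Y α))) (hν : ∀ α, IsGT (ν α))
    (f : ∀ α, X → Y α)
    (hcont : ∀ α, GCont μ (ν α) (f α))
    (hsep : ∀ x₁ x₂ : X, x₁ ≠ x₂ → ∃ α, f α x₁ ≠ f α x₂)
    (hbase : ∀ x : X, ∀ M ∈ μ, x ∈ M →
      ∃ α, ∃ N ∈ ν α, x ∈ f α ⁻¹' N ∧ f α ⁻¹' N ⊆ M)
    (F : X → ∀ α, Y α) (hF : ∀ x, F x = fun α => f α x) :
    Function.Injective F ∧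
      {A : Set (∀ α, Y α) | ∃ M ∈ μ, A = F '' M} =
        {A : Set (∀ α, Y α) | ∃ W ∈ prodGT ν, A = W ∩ Set.range F} := by
  obtain rfl : F = fun x α => f α x := funext hF
  refine ⟨fun x₁ x₂ h => ?_, Set.ext fun A => ⟨?_, ?_⟩⟩
  · by_contra hne
    obtain ⟨α, hα⟩ := hsep x₁ x₂ hne
    exact hα (congrFun h α)
  · rintro ⟨M, hM, rfl⟩
    -- In each coordinate take the largest open set whose preimage lies in `M`.
    refine ⟨_, ⟨fun α => ⋃₀ {N | N ∈ ν α ∧ f α ⁻¹' N ⊆ M},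
      fun α => (hν α).2 _ fun N hN => hN.1, rfl⟩, ?_⟩
    ext y
    constructor
    · rintro ⟨x, hx, rfl⟩
      obtain ⟨α, N, hN, hxN, hNM⟩ := hbase x M hM hx
      exact ⟨Set.mem_iUnion.2 ⟨α, N, ⟨hN, hNM⟩, hxN⟩, x, rfl⟩
    · rintro ⟨hy, x, rfl⟩
      obtain ⟨α, N, ⟨_, hNM⟩, hxN⟩ := Set.mem_iUnion.1 hy
      exact ⟨x, hNM hxN, rfl⟩
  · rintro ⟨W, ⟨N, hN, rfl⟩, rfl⟩
    refine ⟨⋃₀ Set.range fun α => f α ⁻¹' N α, hμ.2 _ ?_, ?_⟩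
    · rintro _ ⟨α, rfl⟩
      exact hcont α _ (hN α)
    · rw [← Set.image_preimage_eq_inter_range, Set.preimage_iUnion, Set.sUnion_range]
      rfl
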